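/- Let F be a field with char F ∉ {2, 3} and let H be the Highwater algebra over F. For every integer j ≥ 1: (i) a_j − a_{−j} is an eigenvector of left multiplication by a_0 with eigenvalue 1/2; (ii) a_j + a_{−j} − 2a_0 + 4s_j is an eigenvector of left multiplication by a_0 with eigenvalue 2; (iii) a_j + a_{−j} − 2a_0 − (4/3)s_j is an eigenvector of left multiplication by a_0 with eigenvalue 0; and (iv) a_0 is idempotent, so a_0 is an eigenvector with eigenvalue 1. -/

import Mathlib

/- STATEMENT 17: explicit eigenvectors of ad(a_0) in the Highwater algebra for the\neigenvalues 1/2, 2, 0 and 1. -/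

/-- The underlying vector space of the Highwater algebra: formal `F`-linear combinations
of basis elements `a_i` (`i : ℤ`, encoded `Sum.inl i`) and `s_j` (`j ≥ 1`, encoded
`Sum.inr (j - 1)`). -/
abbrev HW (F : Type*) [Field F] := (ℤ ⊕ ℕ) →₀ F

variable (F : Type*) [Field F]

/-- The axis `a_i` of the Highwater algebra. -/
noncomputable def hwa (i : ℤ) : HW F := Finsupp.single (Sum.inl i) 1

/-- The element `s_j` of the Highwater algebra (`s_0 = 0`). -/
noncomputable def hws : ℕ → HW F
  | 0 => 0
  | j + 1 => Finsupp.single (Sum.inr j) 1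

/-- Product of two basis elements of the Highwater algebra:
`a_i · a_k = (1/2)(a_i + a_k) + s_{|i-k|}`,
`a_i · s_j = -(3/4) a_i + (3/8)(a_{i-j} + a_{i+j}) + (3/2) s_j`,
`s_j · s_k = (3/4)(s_j + s_k) - (3/8)(s_{|j-k|} + s_{j+k})`. -/
noncomputable def hwBM : ℤ ⊕ ℕ → ℤ ⊕ ℕ → HW F
  | Sum.inl i, Sum.inl k => ((1 : F) / 2) • (hwa F i + hwa F k) + hws F (i - k).natAbs
  | Sum.inl i, Sum.inr j =>
      (-(3 : F) / 4) • hwa F i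
        + ((3 : F) / 8) • (hwa F (i - ((j : ℤ) + 1)) + hwa F (i + ((j : ℤ) + 1)))
        + ((3 : F) / 2) • hws F (j + 1)
  | Sum.inr j, Sum.inl i =>
      (-(3 : F) / 4) • hwa F i
        + ((3 : F) / 8) • (hwa F (i - ((j : ℤ) + 1)) + hwa F (i + ((j : ℤ) + 1)))
        + ((3 : F) / 2) • hws F (j + 1)
  | Sum.inr j, Sum.inr k =>
      ((3 : F) / 4) • (hws F (j + 1) + hws F (k + 1))
        - ((3 : F) / 8) • (hws F ((j : ℤ) - (k : ℤ)).natAbs + hws F (j + k + 2))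

/-- The multiplication of the Highwater algebra: the bilinear extension of `hwBM`. -/
noncomputable def hwMul (x y : HW F) : HW F :=
  x.sum fun i ci => y.sum fun j cj => (ci * cj) • hwBM F i j

/-!
Put `p = a_{i+j} + a_{i-j} - 2 a_i`. Left multiplication by `a_i` preserves the plane spanned by
`p` and `s_j`, sending `p` to `(1/2) p + 2 s_j` and `s_j` to `(3/8) p + (3/2) s_j`. This action has
rank one: `p + c s_j` is sent to `(1/2 + 3c/8) (p + 4 s_j)`. Hence `c = 4` gives the eigenvalue `2`
and `c = -4/3` the eigenvalue `0`. In `a_{i+j} - a_{i-j}`, the two copies of `s_j` cancel, which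
leaves the eigenvalue `1/2`.
-/

theorem eight_ne_zero_of_two_ne_zero {R : Type*} [Semiring R] [NoZeroDivisors R]
    (h2 : (2 : R) ≠ 0) : (8 : R) ≠ 0 := by
  rw [show (8 : R) = 2 ^ 3 by norm_num]
  exact pow_ne_zero 3 h2

/-- Left multiplication by `x` in the Highwater algebra, `ad x`, as a linear map; its underlying
function is `hwMul F x`. -/
noncomputable def hwAd (x : HW F) : Module.End F (HW F) where
  toFun := hwMul F x
  map_add' y z := by
    simp only [hwMul, ← Finsupp.sum_add]
    refine Finsupp.sum_congr fun b _ => Finsupp.sum_add_index' ?_ ?_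
    · simp
    · simp [mul_add, add_smul]
  map_smul' c y := by
    simp only [hwMul, RingHom.id_apply, Finsupp.smul_sum]
    refine Finsupp.sum_congr fun b _ => ?_
    rw [Finsupp.sum_smul_index' (by simp)]
    simp [smul_smul, mul_left_comm]

/-- The symmetric second difference `a_{i+j} + a_{i-j} - 2 a_i` of the axes at `a_i`, the part of
the eigenvectors for `2` and `0` that does not involve `s_j`. -/
noncomputable def hwSecondDiff (i : ℤ) (j : ℕ) : HW F :=
  hwa F (i + j) + hwa F (i - j) - (2 : F) • hwa F i

variable {F}

theorem hwAd_single (b b' : ℤ ⊕ ℕ) :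
    hwAd F (Finsupp.single b 1) (Finsupp.single b' 1) = hwBM F b b' := by
  simp [hwAd, hwMul]

theorem hwAd_hwa_hwa (i k : ℤ) :
    hwAd F (hwa F i) (hwa F k) = ((1 : F) / 2) • (hwa F i + hwa F k) + hws F (i - k).natAbs :=
  hwAd_single (.inl i) (.inl k)

theorem hwAd_hwa_hwa_add (i : ℤ) (j : ℕ) :
    hwAd F (hwa F i) (hwa F (i + j)) = ((1 : F) / 2) • (hwa F i + hwa F (i + j)) + hws F j := by
  simp [hwAd_hwa_hwa]

theorem hwAd_hwa_hwa_sub (i : ℤ) (j : ℕ) :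
    hwAd F (hwa F i) (hwa F (i - j)) = ((1 : F) / 2) • (hwa F i + hwa F (i - j)) + hws F j := by
  simp [hwAd_hwa_hwa]

theorem hwAd_hwa_self (h2 : (2 : F) ≠ 0) (i : ℤ) : hwAd F (hwa F i) (hwa F i) = hwa F i := by
  rw [hwAd_hwa_hwa, sub_self, Int.natAbs_zero, hws, add_zero, ← two_smul F, smul_smul,
    one_div_mul_cancel h2, one_smul]

theorem hwAd_hwa_hwSecondDiff (h2 : (2 : F) ≠ 0) (i : ℤ) (j : ℕ) :
    hwAd F (hwa F i) (hwSecondDiff F i j) =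
      ((1 : F) / 2) • hwSecondDiff F i j + (2 : F) • hws F j := by
  simp only [hwSecondDiff, map_sub, map_add, map_smul, hwAd_hwa_hwa_add, hwAd_hwa_hwa_sub,
    hwAd_hwa_self h2]
  match_scalars <;> field_simp <;> ring

theorem hwSecondDiff_zero_right (i : ℤ) : hwSecondDiff F i 0 = 0 := by
  simp [hwSecondDiff, two_smul]

theorem hwAd_hwa_hws (h2 : (2 : F) ≠ 0) (i : ℤ) (j : ℕ) :
    hwAd F (hwa F i) (hws F j) =
      ((3 : F) / 8) • hwSecondDiff F i j + ((3 : F) / 2) • hws F j := by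
  cases j with
  | zero => simp [hws, hwSecondDiff_zero_right]
  | succ n =>
    have h34 : -(3 : F) / 4 = -((3 / 8) * 2) := by
      rw [show (8 : F) = 4 * 2 by norm_num, div_mul_eq_mul_div, mul_div_mul_right _ _ h2, neg_div]
    refine (hwAd_single (.inl i) (.inr n)).trans ?_
    simp only [hwBM, hwSecondDiff, Nat.cast_succ, h34]
    module

theorem hwAd_hwa_hwSecondDiff_add_smul_hws (h2 : (2 : F) ≠ 0) (i : ℤ) (j : ℕ) (c : F) :
    hwAd F (hwa F i) (hwSecondDiff F i j + c • hws F j) =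
      (1 / 2 + 3 * c / 8) • (hwSecondDiff F i j + (4 : F) • hws F j) := by
  have h8 := eight_ne_zero_of_two_ne_zero h2
  rw [map_add, map_smul, hwAd_hwa_hwSecondDiff h2, hwAd_hwa_hws h2]
  match_scalars
  · field_simp
  · field_simp
    ring

theorem hwa_apply_inl (i k : ℤ) : hwa F i (.inl k) = if i = k then 1 else 0 := by
  simp [hwa, Finsupp.single_apply]

theorem hws_apply_inl (j : ℕ) (k : ℤ) : hws F j (.inl k) = 0 := by
  cases j <;> simp [hws]

theorem hwa_injective : Function.Injective (hwa F) :=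
  (Finsupp.single_left_injective one_ne_zero).comp Sum.inl_injective

theorem hwSecondDiff_add_smul_hws_ne_zero (i : ℤ) {j : ℕ} (hj : j ≠ 0) (c : F) :
    hwSecondDiff F i j + c • hws F j ≠ 0 := by
  have hsub : i - (j : ℤ) ≠ i + j := by lia
  have hcoeff : (hwSecondDiff F i j + c • hws F j) (.inl (i + j)) = 1 := by
    simp [hwSecondDiff, hwa_apply_inl, hws_apply_inl, hsub, hj]
  intro hzero
  simp [hzero] at hcoeff

theorem hasEigenvector_hwAd_half (i : ℤ) {j : ℕ} (hj : j ≠ 0) :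
    (hwAd F (hwa F i)).HasEigenvector (1 / 2) (hwa F (i + j) - hwa F (i - j)) := by
  refine ⟨Module.End.mem_eigenspace_iff.mpr ?_, sub_ne_zero.mpr (hwa_injective.ne (by lia))⟩
  rw [map_sub, hwAd_hwa_hwa_add, hwAd_hwa_hwa_sub]
  module

theorem hasEigenvector_hwAd_two (h2 : (2 : F) ≠ 0) (i : ℤ) {j : ℕ} (hj : j ≠ 0) :
    (hwAd F (hwa F i)).HasEigenvector 2 (hwSecondDiff F i j + (4 : F) • hws F j) := by
  refine ⟨Module.End.mem_eigenspace_iff.mpr ?_, hwSecondDiff_add_smul_hws_ne_zero i hj 4⟩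
  have h8 := eight_ne_zero_of_two_ne_zero h2
  have heigenvalue : (1 / 2 + 3 * 4 / 8 : F) = 2 := by field_simp; norm_num
  rw [hwAd_hwa_hwSecondDiff_add_smul_hws h2, heigenvalue]

theorem hasEigenvector_hwAd_zero (h2 : (2 : F) ≠ 0) (h3 : (3 : F) ≠ 0) (i : ℤ) {j : ℕ}
    (hj : j ≠ 0) :
    (hwAd F (hwa F i)).HasEigenvector 0 (hwSecondDiff F i j - ((4 : F) / 3) • hws F j) := by
  rw [sub_eq_add_neg, ← neg_smul]
  refine ⟨Module.End.mem_eigenspace_iff.mpr ?_, hwSecondDiff_add_smul_hws_ne_zero i hj _⟩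
  have h8 := eight_ne_zero_of_two_ne_zero h2
  have heigenvalue : (1 / 2 + 3 * -(4 / 3) / 8 : F) = 0 := by field_simp; norm_num
  rw [hwAd_hwa_hwSecondDiff_add_smul_hws h2, heigenvalue, zero_smul, zero_smul]

variable (F)

theorem highwater_eigenvectors (h2 : ringChar F ≠ 2) (h3 : ringChar F ≠ 3)
    (j : ℕ) (hj : 1 ≤ j) :
    (hwa F (j : ℤ) - hwa F (-(j : ℤ)) ≠ 0 ∧
      hwMul F (hwa F 0) (hwa F (j : ℤ) - hwa F (-(j : ℤ))) =
        ((1 : F) / 2) • (hwa F (j : ℤ) - hwa F (-(j : ℤ)))) ∧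
    (hwa F (j : ℤ) + hwa F (-(j : ℤ)) - (2 : F) • hwa F 0 + (4 : F) • hws F j ≠ 0 ∧
      hwMul F (hwa F 0) (hwa F (j : ℤ) + hwa F (-(j : ℤ)) - (2 : F) • hwa F 0 + (4 : F) • hws F j) =
        (2 : F) • (hwa F (j : ℤ) + hwa F (-(j : ℤ)) - (2 : F) • hwa F 0 + (4 : F) • hws F j)) ∧
    (hwa F (j : ℤ) + hwa F (-(j : ℤ)) - (2 : F) • hwa F 0 - ((4 : F) / 3) • hws F j ≠ 0 ∧
      hwMul F (hwa F 0)
          (hwa F (j : ℤ) + hwa F (-(j : ℤ)) - (2 : F) • hwa F 0 - ((4 : F) / 3) • hws F j) = 0) ∧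
    hwMul F (hwa F 0) (hwa F 0) = hwa F 0 := by
  have two_ne : (2 : F) ≠ 0 := Ring.two_ne_zero h2
  have three_ne : (3 : F) ≠ 0 := CharP.cast_ne_zero_of_ne_of_prime F Nat.prime_three h3
  have j_ne : j ≠ 0 := Nat.one_le_iff_ne_zero.mp hj
  have half := hasEigenvector_hwAd_half (F := F) 0 j_ne
  have two := hasEigenvector_hwAd_two two_ne 0 j_ne
  have zero := hasEigenvector_hwAd_zero two_ne three_ne 0 j_ne
  simp only [hwSecondDiff, zero_add, zero_sub] at half two zero
  exact ⟨⟨half.2, half.apply_eq_smul⟩, ⟨two.2, two.apply_eq_smul⟩,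
    ⟨zero.2, zero.apply_eq_smul.trans (zero_smul F _)⟩, hwAd_hwa_self two_ne 0⟩
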